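/- There is an absolute constant C such that for all sufficiently large N and all 2 < h ≤ N, the number of ordered pairs of primes (p, p') with N < p, p' ≤ 2N and 0 < p' − p ≤ h is at most C·h·N/(log N)², and hence is ≪ (h/log N)·π(N). -/

import Mathlib

open Finset

/-- The `n`-th prime number (`nthPrime 0 = 2`). -/
noncomputable def nthPrime (n : ℕ) : ℕ := Nat.nth Nat.Prime n

/-- The prime counting function `π(x)` at a real argument: the number of primes `≤ x`. -/
noncomputable def primePi (x : ℝ) : ℕ := Nat.primeCounting ⌊x⌋₊

/-- `P_H(n) = ∏_{h ∈ H} (n + h)`. -/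
def tuplePoly (H : Finset ℕ) (n : ℕ) : ℕ := ∏ h ∈ H, (n + h)

/-- `ν_p(H)`: the number of distinct residue classes modulo `p` occupied by `H`. -/
def nuP (p : ℕ) (H : Finset ℕ) : ℕ := (H.image (· % p)).card

/-- `H` is admissible: for every prime `p`, the elements of `H` miss a residue class mod `p`. -/
def Admissible (H : Finset ℕ) : Prop := ∀ p : ℕ, p.Prime → nuP p H < p

/-- The singular series `𝔖(H) = ∏_p (1 - 1/p)^{-|H|} (1 - ν_p(H)/p)`. -/
noncomputable def singularSeries (H : Finset ℕ) : ℝ :=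
  ∏' p : Nat.Primes, ((1 - 1/((p : ℕ) : ℝ)) ^ (-(H.card : ℤ)) * (1 - (nuP p H : ℝ)/((p : ℕ) : ℝ)))

/-- `Λ_R(n; H, ℓ) = (1/(|H|+ℓ)!) ∑_{d ∣ P_H(n), d ≤ R} μ(d) (log (R/d))^{|H|+ℓ}`. -/
noncomputable def LambdaR (R : ℝ) (n : ℕ) (H : Finset ℕ) (ℓ : ℕ) : ℝ :=
  (1 / (H.card + ℓ).factorial : ℝ) *
    ∑ d ∈ (tuplePoly H n).divisors.filter (fun d : ℕ => (d : ℝ) ≤ R),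
      (ArithmeticFunction.moebius d : ℝ) * (Real.log (R / d)) ^ (H.card + ℓ)

/-- `𝒫(x)`: the product of all primes `≤ x`. -/
noncomputable def primorialReal (x : ℝ) : ℕ :=
  ∏ p ∈ (Finset.range (⌊x⌋₊ + 1)).filter Nat.Prime, p

/-- `θ(n) = log n` if `n` is prime, and `0` otherwise. -/
noncomputable def theta (n : ℕ) : ℝ := if n.Prime then Real.log n else 0

/-- `∑_{p ≤ N, p prime, p ≡ a (mod q)} log p`. -/
noncomputable def primeSumAP (N q a : ℕ) : ℝ :=
  ∑ p ∈ (Finset.range (N+1)).filter (fun p => p.Prime ∧ p % q = a % q), Real.log p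

/-- The primes have level of distribution `ϑ`: for every `A > 0` and `ε > 0`,
`∑_{q ≤ N^{ϑ-ε}} max_{(a,q)=1} |∑_{p ≤ N, p ≡ a (q)} log p - N/φ(q)| ≪_{A,ε} N (log N)^{-A}`
(the max over `a` is expressed via an arbitrary coprime choice function `a : ℕ → ℕ`). -/
def HasLevelOfDistribution (ϑ : ℝ) : Prop :=
  ∀ A : ℝ, 0 < A → ∀ ε : ℝ, 0 < ε → ∃ C : ℝ, 0 < C ∧
    ∀ N : ℕ, 2 ≤ N → ∀ a : ℕ → ℕ, (∀ q : ℕ, Nat.Coprime (a q) q) →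
      ∑ q ∈ Finset.Icc 1 ⌊(N : ℝ) ^ (ϑ - ε)⌋₊,
        |primeSumAP N q (a q) - (N : ℝ) / (Nat.totient q)| ≤ C * N / (Real.log N) ^ A

/-- The number of `j` with `N < p_j ≤ 2N` and `p_{j+1} - p_j ≤ h`. -/
noncomputable def gapCount (N : ℕ) (h : ℝ) : ℕ :=
  ((Finset.range (2*N+1)).filter (fun j =>
    N < nthPrime j ∧ nthPrime j ≤ 2*N ∧ ((nthPrime (j+1) : ℝ) - nthPrime j) ≤ h)).card

/-- The number of `j` with `N < p_j ≤ 2N` and `p_{j+2} - p_j ≤ h`. -/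
noncomputable def gapCount2 (N : ℕ) (h : ℝ) : ℕ :=
  ((Finset.range (2*N+1)).filter (fun j =>
    N < nthPrime j ∧ nthPrime j ≤ 2*N ∧ ((nthPrime (j+2) : ℝ) - nthPrime j) ≤ h)).card

/-!
The pairs with `p' - p = k` are counted by Selberg's sieve applied to the values `n * (n + k)`: its
main term is `N / ∑ τ(l) / l`, the sum running over the squarefree `l ≤ Y` coprime to `2k`. Dropping
the coprimality condition costs a factor `F(k) = ∑_{m ∣ 2k} τ(m) / m`, and the full sum is
`≫ (log Y) ^ 2` because it dominates `(∑ 1 / m) ^ 2` over squarefree `m ≤ √Y`, up to the bounded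
factor coming from common divisors. With `Y` a small power of `N`, each difference `k` therefore
contributes `≪ F(k) N / (log N) ^ 2`. Finally `F(k)` is bounded on average over `k ≤ h`, since
`∑ τ(m) / m ^ 2` converges, and Chebyshev's lower bound turns `N / log N` into `π(N)`.
-/

section SelbergSieve

open scoped ArithmeticFunction.Moebius

lemma sum_moebius_divisors_filter_dvd {m : ℕ} (hm : Squarefree m) (l : ℕ) :
    ∑ d ∈ m.divisors with l ∣ d, μ d = if l = m then μ m else 0 := by
  by_cases hlm : l ∣ m
  · obtain ⟨e, rfl⟩ := hlm
    have hl : 0 < l := Nat.pos_of_ne_zero (left_ne_zero_of_mul hm.ne_zero)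
    have hcop : l.Coprime e := Nat.coprime_of_squarefree_mul hm
    have himage : {d ∈ (l * e).divisors | l ∣ d} = e.divisors.image (l * ·) := by
      ext d
      simp only [mem_filter, Nat.mem_divisors, mem_image]
      constructor
      · rintro ⟨⟨hd, hle⟩, f, rfl⟩
        exact ⟨f, ⟨Nat.dvd_of_mul_dvd_mul_left hl hd, right_ne_zero_of_mul hle⟩, rfl⟩
      · rintro ⟨f, ⟨hf, -⟩, rfl⟩
        exact ⟨⟨mul_dvd_mul_left l hf, hm.ne_zero⟩, dvd_mul_right l f⟩
    calc ∑ d ∈ (l * e).divisors with l ∣ d, μ d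
        = ∑ f ∈ e.divisors, μ (l * f) := by
          rw [himage, sum_image fun _ _ _ _ h => Nat.eq_of_mul_eq_mul_left hl h]
      _ = μ l * ∑ f ∈ e.divisors, μ f := by
          rw [mul_sum]
          refine sum_congr rfl fun f hf => ?_
          exact ArithmeticFunction.isMultiplicative_moebius.map_mul_of_coprime
            (hcop.coprime_dvd_right (Nat.dvd_of_mem_divisors hf))
      _ = μ l * if e = 1 then 1 else 0 := by
          rw [← ArithmeticFunction.coe_zeta_mul_apply, ArithmeticFunction.coe_zeta_mul_moebius,
            ArithmeticFunction.one_apply]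
      _ = if l = l * e then μ (l * e) else 0 := by
          rcases eq_or_ne e 1 with rfl | he
          · simp
          · simp [he, hl.ne']
  · rw [if_neg (mt Eq.dvd hlm), sum_eq_zero]
    intro d hd
    simp only [mem_filter, Nat.mem_divisors] at hd
    exact absurd (hd.2.trans hd.1.1) hlm

/-- The optimal weights of Selberg's `Λ²` sieve on a set `T` of sifting moduli, i.e. the minimiser
of the quadratic form `BoundingSieve.mainSum_lambdaSquared_eq_sum_mul_sum_sq` among the weights
supported on `T` with value `1` at `1`. -/
noncomputable def selbergWeight (s : BoundingSieve) (T : Finset ℕ) (d : ℕ) : ℝ :=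
  μ d * (s.nu d)⁻¹ * ((∑ m ∈ T with d ∣ m, s.selbergTerms m) / ∑ m ∈ T, s.selbergTerms m)

variable (s : BoundingSieve) {T : Finset ℕ}

lemma nu_le_selbergTerms {l : ℕ} (hl : l ∣ s.prodPrimes) : s.nu l ≤ s.selbergTerms l := by
  rw [BoundingSieve.selbergTerms_apply]
  refine le_mul_of_one_le_right (BoundingSieve.nu_pos_of_dvd_prodPrimes hl).le
    (one_le_prod fun p hp => ?_)
  have hp_prime := Nat.prime_of_mem_primeFactors hp
  have hp_dvd := (Nat.dvd_of_mem_primeFactors hp).trans hl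
  have hpos := s.nu_pos_of_prime p hp_prime hp_dvd
  have hlt := s.nu_lt_one_of_prime p hp_prime hp_dvd
  exact (one_le_inv₀ (by linarith)).2 (by linarith)

lemma sum_selbergTerms_pos (hT : T ⊆ s.prodPrimes.divisors) (hne : T.Nonempty) :
    0 < ∑ m ∈ T, s.selbergTerms m :=
  sum_pos (fun _ hm => BoundingSieve.selbergTerms_pos (Nat.dvd_of_mem_divisors (hT hm))) hne

lemma selbergWeight_one (hT : T ⊆ s.prodPrimes.divisors) (hne : T.Nonempty) :
    selbergWeight s T 1 = 1 := by
  simp [selbergWeight, s.nu_mult.map_one, (sum_selbergTerms_pos s hT hne).ne']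

lemma selbergWeight_eq_zero {d : ℕ} (hT : ∀ m ∈ T, ∀ e, e ∣ m → e ∈ T) (hd : d ∉ T) :
    selbergWeight s T d = 0 := by
  rw [selbergWeight, filter_eq_empty_iff.2 fun m hm hdm => hd (hT m hm d hdm)]
  simp

lemma abs_selbergWeight_le {d : ℕ} (hT : T ⊆ s.prodPrimes.divisors) (hd : d ∣ s.prodPrimes) :
    |selbergWeight s T d| ≤ (s.nu d)⁻¹ := by
  have hg : ∀ m ∈ T, 0 ≤ s.selbergTerms m := fun m hm =>
    (BoundingSieve.selbergTerms_pos (Nat.dvd_of_mem_divisors (hT hm))).le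
  have hnu : 0 ≤ (s.nu d)⁻¹ := (inv_pos.2 (BoundingSieve.nu_pos_of_dvd_prodPrimes hd)).le
  have hmoebius : |(μ d : ℝ)| ≤ 1 := by exact_mod_cast ArithmeticFunction.abs_moebius_le_one
  have hratio_nonneg : 0 ≤ (∑ m ∈ T with d ∣ m, s.selbergTerms m) / ∑ m ∈ T, s.selbergTerms m :=
    div_nonneg (sum_nonneg fun m hm => hg m (mem_filter.1 hm).1) (sum_nonneg hg)
  have hratio_le : (∑ m ∈ T with d ∣ m, s.selbergTerms m) / ∑ m ∈ T, s.selbergTerms m ≤ 1 :=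
    div_le_one_of_le₀
      (sum_le_sum_of_subset_of_nonneg (filter_subset _ _) fun m hm _ => hg m hm) (sum_nonneg hg)
  calc |selbergWeight s T d|
      = |(μ d : ℝ)| * (s.nu d)⁻¹ *
          ((∑ m ∈ T with d ∣ m, s.selbergTerms m) / ∑ m ∈ T, s.selbergTerms m) := by
        rw [selbergWeight, abs_mul, abs_mul, abs_of_nonneg hnu, abs_of_nonneg hratio_nonneg]
    _ ≤ 1 * (s.nu d)⁻¹ * 1 := by gcongr
    _ = (s.nu d)⁻¹ := by ring

lemma sum_nu_mul_selbergWeight (hT : T ⊆ s.prodPrimes.divisors) (l : ℕ) :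
    ∑ d ∈ s.prodPrimes.divisors, (if l ∣ d then s.nu d * selbergWeight s T d else 0)
      = if l ∈ T then (∑ m ∈ T, s.selbergTerms m)⁻¹ * s.selbergTerms l * μ l else 0 := by
  set G := ∑ m ∈ T, s.selbergTerms m with hG
  have hcancel : ∀ d ∈ s.prodPrimes.divisors, s.nu d * selbergWeight s T d =
      ∑ m ∈ T with d ∣ m, G⁻¹ * s.selbergTerms m * μ d := by
    intro d hd
    have hnu : s.nu d ≠ 0 := BoundingSieve.nu_ne_zero (Nat.dvd_of_mem_divisors hd)
    rw [selbergWeight, ← hG, ← sum_mul, ← mul_sum]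
    field_simp
  calc ∑ d ∈ s.prodPrimes.divisors, (if l ∣ d then s.nu d * selbergWeight s T d else 0)
      = ∑ d ∈ s.prodPrimes.divisors with l ∣ d, ∑ m ∈ T with d ∣ m,
          G⁻¹ * s.selbergTerms m * μ d := by
        rw [← sum_filter]
        exact sum_congr rfl fun d hd => hcancel d (mem_filter.1 hd).1
    _ = ∑ m ∈ T, ∑ d ∈ m.divisors with l ∣ d, G⁻¹ * s.selbergTerms m * μ d := by
        refine sum_comm' fun d m => ?_
        simp only [mem_filter, Nat.mem_divisors]
        constructor
        · rintro ⟨⟨-, hld⟩, hm, hdm⟩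
          exact ⟨⟨⟨hdm, (Nat.pos_of_mem_divisors (hT hm)).ne'⟩, hld⟩, hm⟩
        · rintro ⟨⟨⟨hdm, -⟩, hld⟩, hm⟩
          exact ⟨⟨⟨hdm.trans (Nat.dvd_of_mem_divisors (hT hm)),
            BoundingSieve.prodPrimes_ne_zero⟩, hld⟩, hm, hdm⟩
    _ = ∑ m ∈ T, if l = m then G⁻¹ * s.selbergTerms m * μ m else 0 := by
        refine sum_congr rfl fun m hm => ?_
        have hsq : Squarefree m := BoundingSieve.squarefree_of_mem_divisors_prodPrimes (hT hm)
        rw [← mul_sum, ← Int.cast_sum, sum_moebius_divisors_filter_dvd hsq]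
        split_ifs <;> simp
    _ = if l ∈ T then G⁻¹ * s.selbergTerms l * μ l else 0 := sum_ite_eq T l _

lemma mainSum_lambdaSquared_selbergWeight (hT : T ⊆ s.prodPrimes.divisors) :
    s.mainSum (BoundingSieve.lambdaSquared (selbergWeight s T))
      = (∑ m ∈ T, s.selbergTerms m)⁻¹ := by
  set G := ∑ m ∈ T, s.selbergTerms m with hG
  have hterm : ∀ l ∈ T, (s.selbergTerms l)⁻¹ * (G⁻¹ * s.selbergTerms l * μ l) ^ 2
      = G⁻¹ ^ 2 * s.selbergTerms l := by
    intro l hl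
    have hg : s.selbergTerms l ≠ 0 :=
      (BoundingSieve.selbergTerms_pos (Nat.dvd_of_mem_divisors (hT hl))).ne'
    have hmoebius : (μ l : ℝ) ^ 2 = 1 := by
      exact_mod_cast ArithmeticFunction.moebius_sq_eq_one_of_squarefree
        (BoundingSieve.squarefree_of_mem_divisors_prodPrimes (hT hl))
    rw [mul_pow, hmoebius]
    field_simp
  calc s.mainSum (BoundingSieve.lambdaSquared (selbergWeight s T))
      = ∑ l ∈ s.prodPrimes.divisors,
          if l ∈ T then (s.selbergTerms l)⁻¹ * (G⁻¹ * s.selbergTerms l * μ l) ^ 2 else 0 := by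
        rw [BoundingSieve.mainSum_lambdaSquared_eq_sum_mul_sum_sq]
        refine sum_congr rfl fun l _ => ?_
        rw [sum_nu_mul_selbergWeight s hT]
        split_ifs <;> simp [hG]
    _ = ∑ l ∈ T, (s.selbergTerms l)⁻¹ * (G⁻¹ * s.selbergTerms l * μ l) ^ 2 := by
        rw [sum_ite_mem, inter_eq_right.2 hT]
    _ = G⁻¹ ^ 2 * G := by rw [sum_congr rfl hterm, ← mul_sum]
    _ = G⁻¹ := by simpa [sq] using mul_self_mul_inv G⁻¹

lemma abs_lambdaSquared_le (w : ℕ → ℝ) {d n : ℕ} (hd : d ∈ n.divisors) :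
    |BoundingSieve.lambdaSquared w d| ≤
      ∑ d₁ ∈ n.divisors, ∑ d₂ ∈ n.divisors, if d = d₁.lcm d₂ then |w d₁| * |w d₂| else 0 := by
  have hsub : d.divisors ⊆ n.divisors :=
    Nat.divisors_subset_of_dvd (Nat.mem_divisors.1 hd).2 (Nat.dvd_of_mem_divisors hd)
  have hnonneg : ∀ d₁ d₂ : ℕ, 0 ≤ if d = d₁.lcm d₂ then |w d₁| * |w d₂| else 0 := by
    intros; split_ifs <;> positivity
  calc |BoundingSieve.lambdaSquared w d|
      ≤ ∑ d₁ ∈ d.divisors, ∑ d₂ ∈ d.divisors, |if d = d₁.lcm d₂ then w d₁ * w d₂ else 0| :=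
        (abs_sum_le_sum_abs _ _).trans (sum_le_sum fun _ _ => abs_sum_le_sum_abs _ _)
    _ = ∑ d₁ ∈ d.divisors, ∑ d₂ ∈ d.divisors, if d = d₁.lcm d₂ then |w d₁| * |w d₂| else 0 := by
        simp only [apply_ite abs, abs_mul, abs_zero]
    _ ≤ ∑ d₁ ∈ n.divisors, ∑ d₂ ∈ d.divisors, if d = d₁.lcm d₂ then |w d₁| * |w d₂| else 0 :=
        sum_le_sum_of_subset_of_nonneg hsub fun d₁ _ _ => sum_nonneg fun d₂ _ => hnonneg d₁ d₂
    _ ≤ _ := sum_le_sum fun d₁ _ =>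
        sum_le_sum_of_subset_of_nonneg hsub fun d₂ _ _ => hnonneg d₁ d₂

lemma errSum_lambdaSquared_le (w : ℕ → ℝ) :
    s.errSum (BoundingSieve.lambdaSquared w) ≤
      ∑ d₁ ∈ s.prodPrimes.divisors, ∑ d₂ ∈ s.prodPrimes.divisors,
        |w d₁| * |w d₂| * |s.rem (d₁.lcm d₂)| := by
  set D := s.prodPrimes.divisors with hD
  calc s.errSum (BoundingSieve.lambdaSquared w)
      ≤ ∑ d ∈ D, (∑ d₁ ∈ D, ∑ d₂ ∈ D, if d = d₁.lcm d₂ then |w d₁| * |w d₂| else 0)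
          * |s.rem d| := by
        rw [BoundingSieve.errSum, ← hD]
        gcongr with d hd
        exact abs_lambdaSquared_le w hd
    _ = ∑ d₁ ∈ D, ∑ d₂ ∈ D, ∑ d ∈ D,
          if d = d₁.lcm d₂ then |w d₁| * |w d₂| * |s.rem d| else 0 := by
        simp only [sum_mul, ite_mul, zero_mul]
        rw [sum_comm]
        exact sum_congr rfl fun _ _ => sum_comm
    _ = ∑ d₁ ∈ D, ∑ d₂ ∈ D, |w d₁| * |w d₂| * |s.rem (d₁.lcm d₂)| := by
        refine sum_congr rfl fun d₁ hd₁ => sum_congr rfl fun d₂ hd₂ => ?_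
        have hlcm : d₁.lcm d₂ ∈ D := Nat.mem_divisors.2 ⟨Nat.lcm_dvd_iff.2
          ⟨Nat.dvd_of_mem_divisors hd₁, Nat.dvd_of_mem_divisors hd₂⟩,
          BoundingSieve.prodPrimes_ne_zero⟩
        rw [sum_ite_eq', if_pos hlcm]

theorem siftedSum_le_selberg (hT : T ⊆ s.prodPrimes.divisors) (hne : T.Nonempty)
    (hclosed : ∀ m ∈ T, ∀ d, d ∣ m → d ∈ T) :
    s.siftedSum ≤ s.totalMass / (∑ m ∈ T, s.selbergTerms m) +
      ∑ d₁ ∈ T, ∑ d₂ ∈ T, (s.nu d₁)⁻¹ * (s.nu d₂)⁻¹ * |s.rem (d₁.lcm d₂)| := by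
  set w := selbergWeight s T
  have hsupport : ∀ d, d ∉ T → w d = 0 := fun d => selbergWeight_eq_zero s hclosed
  have hrestrict : ∑ d₁ ∈ s.prodPrimes.divisors, ∑ d₂ ∈ s.prodPrimes.divisors,
        |w d₁| * |w d₂| * |s.rem (d₁.lcm d₂)|
      = ∑ d₁ ∈ T, ∑ d₂ ∈ T, |w d₁| * |w d₂| * |s.rem (d₁.lcm d₂)| := by
    refine (sum_subset hT fun d₁ _ h => by simp [hsupport d₁ h]).symm.trans
      (sum_congr rfl fun d₁ _ => (sum_subset hT fun d₂ _ h => by simp [hsupport d₂ h]).symm)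
  calc s.siftedSum
      ≤ s.totalMass * s.mainSum (BoundingSieve.lambdaSquared w)
          + s.errSum (BoundingSieve.lambdaSquared w) :=
        BoundingSieve.siftedSum_le_mainSum_errSum_of_upperMoebius _
          (BoundingSieve.upperMoebius_lambdaSquared w (selbergWeight_one s hT hne))
    _ ≤ s.totalMass * (∑ m ∈ T, s.selbergTerms m)⁻¹
          + ∑ d₁ ∈ T, ∑ d₂ ∈ T, |w d₁| * |w d₂| * |s.rem (d₁.lcm d₂)| := by
        rw [mainSum_lambdaSquared_selbergWeight s hT, ← hrestrict]
        gcongr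
        exact errSum_lambdaSquared_le s w
    _ ≤ _ := by
        rw [← div_eq_mul_inv]
        gcongr with d₁ hd₁ d₂ hd₂
        · exact inv_nonneg.2 (BoundingSieve.nu_pos_of_dvd_prodPrimes
            (Nat.dvd_of_mem_divisors (hT hd₁))).le
        · exact abs_selbergWeight_le s hT (Nat.dvd_of_mem_divisors (hT hd₁))
        · exact abs_selbergWeight_le s hT (Nat.dvd_of_mem_divisors (hT hd₂))

end SelbergSieve

section DivisorSums

open scoped ArithmeticFunction.sigma

lemma sum_le_sum_of_injOn {ι κ M : Type*} [AddCommMonoid M] [PartialOrder M]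
    [IsOrderedAddMonoid M] {s : Finset ι} {t : Finset κ} {f : ι → M} {g : κ → M} (i : ι → κ)
    (hmaps : ∀ a ∈ s, i a ∈ t) (hinj : Set.InjOn i s) (hle : ∀ a ∈ s, f a ≤ g (i a))
    (hg : ∀ b ∈ t, 0 ≤ g b) : ∑ a ∈ s, f a ≤ ∑ b ∈ t, g b := by
  classical
  calc ∑ a ∈ s, f a ≤ ∑ a ∈ s, g (i a) := sum_le_sum hle
    _ = ∑ b ∈ s.image i, g b := (sum_image hinj).symm
    _ ≤ ∑ b ∈ t, g b :=
        sum_le_sum_of_subset_of_nonneg (image_subset_iff.2 hmaps) fun b hb _ => hg b hb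

lemma sum_inv_sq_le_two (t : ℕ) : ∑ a ∈ Ioc 0 t, ((a : ℝ) ^ 2)⁻¹ ≤ 2 := by
  have h := sum_Ioo_inv_sq_le (α := ℝ) 0 (t + 1)
  rw [show Ioo 0 (t + 1) = Ioc 0 t by ext; simp] at h
  simpa using h

lemma card_divisorsAntidiagonal (n : ℕ) : #n.divisorsAntidiagonal = #n.divisors := by
  rw [← Nat.map_div_right_divisors, card_map]

/-- The arithmetic function `n ↦ τ(n) / n`: the density of the residues `v` modulo a squarefree `n`
with `n ∣ v * (v + k)`, for any `k` coprime to `n`. -/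
noncomputable def divisorDensity : ArithmeticFunction ℝ :=
  (σ 0 : ArithmeticFunction ℝ).pdiv (ArithmeticFunction.id : ArithmeticFunction ℝ)

lemma divisorDensity_apply (n : ℕ) : divisorDensity n = #n.divisors / n := by
  simp [divisorDensity, ArithmeticFunction.pdiv_apply, ArithmeticFunction.sigma_zero_apply]

lemma divisorDensity_nonneg (n : ℕ) : 0 ≤ divisorDensity n := by
  rw [divisorDensity_apply]
  positivity

lemma isMultiplicative_divisorDensity : divisorDensity.IsMultiplicative :=
  ArithmeticFunction.isMultiplicative_sigma.natCast.pdiv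
    ArithmeticFunction.isMultiplicative_id.natCast

lemma sum_divisorDensity_div_le (N : ℕ) : ∑ m ∈ Ioc 0 N, divisorDensity m / m ≤ 4 := by
  let invSq : ArithmeticFunction ℝ := ⟨fun n => ((n : ℝ) ^ 2)⁻¹, by simp⟩
  have hconv : ∀ n, divisorDensity n / n = (invSq * invSq) n := by
    intro n
    have hconst : ∀ x ∈ n.divisorsAntidiagonal, invSq x.1 * invSq x.2 = ((n : ℝ) ^ 2)⁻¹ := by
      intro x hx
      rw [← (Nat.mem_divisorsAntidiagonal.1 hx).1]
      simp [invSq, mul_pow, mul_comm]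
    rw [ArithmeticFunction.mul_apply, sum_congr rfl hconst, sum_const,
      card_divisorsAntidiagonal, divisorDensity_apply, nsmul_eq_mul]
    ring
  calc ∑ m ∈ Ioc 0 N, divisorDensity m / m
      = ∑ x ∈ Ioc 0 N ×ˢ Ioc 0 N with x.1 * x.2 ≤ N, invSq x.1 * invSq x.2 := by
        simp only [hconv, ArithmeticFunction.sum_Ioc_mul_eq_sum_prod_filter]
    _ ≤ ∑ x ∈ Ioc 0 N ×ˢ Ioc 0 N, invSq x.1 * invSq x.2 :=
        sum_le_sum_of_subset_of_nonneg (filter_subset _ _) fun x _ _ =>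
          mul_nonneg (inv_nonneg.2 (sq_nonneg _)) (inv_nonneg.2 (sq_nonneg _))
    _ = (∑ a ∈ Ioc 0 N, ((a : ℝ) ^ 2)⁻¹) * ∑ b ∈ Ioc 0 N, ((b : ℝ) ^ 2)⁻¹ := by
        rw [sum_mul_sum, ← sum_product']
        rfl
    _ ≤ 2 * 2 := by
        gcongr <;> exact sum_inv_sq_le_two N
    _ = 4 := by norm_num

lemma sum_sum_divisors_le {f : ArithmeticFunction ℝ} (hf : ∀ n, 0 ≤ f n) (N : ℕ) :
    ∑ j ∈ Ioc 0 N, ∑ m ∈ j.divisors, f m ≤ N * ∑ m ∈ Ioc 0 N, f m / m := by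
  simp only [← ArithmeticFunction.coe_mul_zeta_apply, ArithmeticFunction.sum_Ioc_mul_zeta_eq_sum]
  rw [mul_sum]
  refine sum_le_sum fun m _ => ?_
  calc f m * ((N / m : ℕ) : ℝ) ≤ f m * (N / m) :=
        mul_le_mul_of_nonneg_left Nat.cast_div_le (hf m)
    _ = N * (f m / m) := by ring

lemma sum_sum_divisors_two_mul_divisorDensity_le (H : ℕ) :
    ∑ k ∈ Ioc 0 H, ∑ m ∈ (2 * k).divisors, divisorDensity m ≤ 8 * H := by
  calc ∑ k ∈ Ioc 0 H, ∑ m ∈ (2 * k).divisors, divisorDensity m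
      ≤ ∑ j ∈ Ioc 0 (2 * H), ∑ m ∈ j.divisors, divisorDensity m :=
        sum_le_sum_of_injOn (2 * ·) (fun k hk => by simp only [mem_Ioc] at hk ⊢; omega)
          (fun a _ b _ h => Nat.eq_of_mul_eq_mul_left two_pos h) (fun _ _ => le_rfl)
          fun _ _ => sum_nonneg fun m _ => divisorDensity_nonneg m
    _ ≤ (2 * H : ℕ) * ∑ m ∈ Ioc 0 (2 * H), divisorDensity m / m :=
        sum_sum_divisors_le divisorDensity_nonneg _
    _ ≤ (2 * H : ℕ) * 4 := by
        gcongr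
        exact sum_divisorDensity_div_le _
    _ = 8 * H := by push_cast; ring

lemma log_add_one_le_two_mul_sum_inv_squarefree (t : ℕ) :
    Real.log (t + 1) ≤ 2 * ∑ m ∈ Ioc 0 t with Squarefree m, (m : ℝ)⁻¹ := by
  choose A B hAB hA using Nat.sq_mul_squarefree
  calc Real.log (t + 1) ≤ ∑ n ∈ Ioc 0 t, (n : ℝ)⁻¹ := by
        simpa [harmonic_eq_sum_Icc, ← Icc_add_one_left_eq_Ioc] using log_add_one_le_harmonic t
    _ ≤ ∑ x ∈ Ioc 0 t ×ˢ {m ∈ Ioc 0 t | Squarefree m}, ((x.1 : ℝ) ^ 2)⁻¹ * (x.2 : ℝ)⁻¹ := by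
        refine sum_le_sum_of_injOn (fun n => (B n, A n)) (fun n hn => ?_) (fun a _ b _ h => ?_)
          (fun n _ => ?_) fun _ _ => by positivity
        · obtain ⟨hpos, hle⟩ := mem_Ioc.1 hn
          have hB : B n ∣ n := ⟨B n * A n, by rw [← mul_assoc, ← sq, hAB]⟩
          have hA_dvd : A n ∣ n := ⟨B n ^ 2, by rw [mul_comm, hAB]⟩
          simp only [mem_product, mem_filter, mem_Ioc]
          exact ⟨⟨Nat.pos_of_dvd_of_pos hB hpos, (Nat.le_of_dvd hpos hB).trans hle⟩,
            ⟨Nat.pos_of_dvd_of_pos hA_dvd hpos, (Nat.le_of_dvd hpos hA_dvd).trans hle⟩, hA n⟩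
        · obtain ⟨hB, hA⟩ := Prod.mk.inj h
          rw [← hAB a, ← hAB b, hA, hB]
        · rw [← mul_inv]
          exact_mod_cast (congrArg (fun n : ℕ => (n : ℝ)⁻¹) (hAB n)).ge
    _ = (∑ a ∈ Ioc 0 t, ((a : ℝ) ^ 2)⁻¹) * ∑ m ∈ Ioc 0 t with Squarefree m, (m : ℝ)⁻¹ := by
        rw [sum_mul_sum, ← sum_product']
    _ ≤ 2 * ∑ m ∈ Ioc 0 t with Squarefree m, (m : ℝ)⁻¹ := by
        gcongr
        exact sum_inv_sq_le_two t

lemma sq_gcd_mul_div_gcd_mul_div_gcd (a b : ℕ) :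
    a.gcd b ^ 2 * (a / a.gcd b * (b / a.gcd b)) = a * b := by
  rw [sq, mul_mul_mul_comm, Nat.mul_div_cancel' (Nat.gcd_dvd_left a b),
    Nat.mul_div_cancel' (Nat.gcd_dvd_right a b)]

lemma sq_sum_inv_squarefree_le (t : ℕ) :
    (∑ m ∈ Ioc 0 t with Squarefree m, (m : ℝ)⁻¹) ^ 2 ≤
      2 * ∑ x ∈ Ioc 0 t ×ˢ Ioc 0 t with Squarefree (x.1 * x.2), ((x.1 * x.2 : ℕ) : ℝ)⁻¹ := by
  set S := {m ∈ Ioc 0 t | Squarefree m}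
  set R := {x ∈ Ioc 0 t ×ˢ Ioc 0 t | Squarefree (x.1 * x.2)}
  calc (∑ m ∈ S, (m : ℝ)⁻¹) ^ 2 = ∑ x ∈ S ×ˢ S, (x.1 : ℝ)⁻¹ * (x.2 : ℝ)⁻¹ := by
        rw [sq, sum_mul_sum, ← sum_product']
    _ ≤ ∑ y ∈ Ioc 0 t ×ˢ R, ((y.1 : ℝ) ^ 2)⁻¹ * ((y.2.1 * y.2.2 : ℕ) : ℝ)⁻¹ := by
        refine sum_le_sum_of_injOn
          (fun x => (x.1.gcd x.2, x.1 / x.1.gcd x.2, x.2 / x.1.gcd x.2)) ?_ ?_ ?_ ?_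
        · rintro ⟨a, b⟩ hab
          simp only [S, mem_product, mem_filter, mem_Ioc] at hab
          obtain ⟨⟨⟨ha, hat⟩, ha_sq⟩, ⟨hb, hbt⟩, hb_sq⟩ := hab
          have hg : 0 < a.gcd b := Nat.gcd_pos_of_pos_left b ha
          have hga := Nat.gcd_dvd_left a b
          have hgb := Nat.gcd_dvd_right a b
          simp only [R, mem_product, mem_filter, mem_Ioc, Nat.squarefree_mul_iff]
          exact ⟨⟨hg, (Nat.le_of_dvd ha hga).trans hat⟩,
            ⟨⟨Nat.div_pos (Nat.le_of_dvd ha hga) hg, (Nat.div_le_self a _).trans hat⟩,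
              Nat.div_pos (Nat.le_of_dvd hb hgb) hg, (Nat.div_le_self b _).trans hbt⟩,
            Nat.coprime_div_gcd_div_gcd hg, ha_sq.squarefree_of_dvd (Nat.div_dvd_of_dvd hga),
            hb_sq.squarefree_of_dvd (Nat.div_dvd_of_dvd hgb)⟩
        · rintro ⟨a, b⟩ _ ⟨c, d⟩ _ h
          simp only [Prod.mk.injEq] at h ⊢
          obtain ⟨hgcd, hac, hbd⟩ := h
          rw [← hgcd] at hac hbd
          exact ⟨(Nat.div_left_inj (Nat.gcd_dvd_left a b) (hgcd ▸ Nat.gcd_dvd_left c d)).1 hac,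
            (Nat.div_left_inj (Nat.gcd_dvd_right a b) (hgcd ▸ Nat.gcd_dvd_right c d)).1 hbd⟩
        · rintro ⟨a, b⟩ _
          dsimp only
          rw [← mul_inv, ← mul_inv]
          exact_mod_cast (congrArg (fun n : ℕ => (n : ℝ)⁻¹)
            (sq_gcd_mul_div_gcd_mul_div_gcd a b)).ge
        · intros; positivity
    _ = (∑ g ∈ Ioc 0 t, ((g : ℝ) ^ 2)⁻¹) * ∑ x ∈ R, ((x.1 * x.2 : ℕ) : ℝ)⁻¹ := by
        rw [sum_mul_sum, ← sum_product']
    _ ≤ 2 * ∑ x ∈ R, ((x.1 * x.2 : ℕ) : ℝ)⁻¹ := by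
        gcongr
        exact sum_inv_sq_le_two t

lemma sum_inv_mul_squarefree_le_sum_divisorDensity (t : ℕ) :
    ∑ x ∈ Ioc 0 t ×ˢ Ioc 0 t with Squarefree (x.1 * x.2), ((x.1 * x.2 : ℕ) : ℝ)⁻¹ ≤
      ∑ n ∈ Ioc 0 (t ^ 2) with Squarefree n, divisorDensity n := by
  rw [← sum_fiberwise_of_maps_to (t := {n ∈ Ioc 0 (t ^ 2) | Squarefree n})
    (g := fun x : ℕ × ℕ => x.1 * x.2) fun x hx => ?_]
  · refine sum_le_sum fun n hn => ?_
    have hn0 : n ≠ 0 := (mem_filter.1 hn).2.ne_zero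
    rw [sum_congr rfl fun x hx => by rw [(mem_filter.1 hx).2], sum_const, nsmul_eq_mul,
      ← div_eq_mul_inv, divisorDensity_apply, ← card_divisorsAntidiagonal]
    gcongr
    intro x hx
    exact Nat.mem_divisorsAntidiagonal.2 ⟨(mem_filter.1 hx).2, hn0⟩
  · simp only [mem_filter, mem_product, mem_Ioc] at hx ⊢
    obtain ⟨⟨⟨ha, hat⟩, hb, hbt⟩, hsq⟩ := hx
    exact ⟨⟨Nat.mul_pos ha hb, sq t ▸ Nat.mul_le_mul hat hbt⟩, hsq⟩

lemma sq_log_add_one_le_sum_divisorDensity (t : ℕ) :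
    Real.log (t + 1) ^ 2 ≤ 8 * ∑ n ∈ Ioc 0 (t ^ 2) with Squarefree n, divisorDensity n := by
  calc Real.log (t + 1) ^ 2
      ≤ (2 * ∑ m ∈ Ioc 0 t with Squarefree m, (m : ℝ)⁻¹) ^ 2 := by
        refine pow_le_pow_left₀ (Real.log_nonneg (by simp)) ?_ 2
        exact log_add_one_le_two_mul_sum_inv_squarefree t
    _ = 4 * (∑ m ∈ Ioc 0 t with Squarefree m, (m : ℝ)⁻¹) ^ 2 := by ring
    _ ≤ 4 * (2 * ∑ n ∈ Ioc 0 (t ^ 2) with Squarefree n, divisorDensity n) := by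
        grw [sq_sum_inv_squarefree_le, sum_inv_mul_squarefree_le_sum_divisorDensity]
    _ = _ := by ring

lemma sum_squarefree_le_sum_divisors_mul_sum_coprime {f : ArithmeticFunction ℝ}
    (hmult : f.IsMultiplicative) (hf : ∀ n, 0 ≤ f n) {q : ℕ} (hq : q ≠ 0) (Y : ℕ) :
    ∑ n ∈ Ioc 0 Y with Squarefree n, f n ≤
      (∑ m ∈ q.divisors, f m) * ∑ l ∈ Ioc 0 Y with Squarefree l ∧ l.Coprime q, f l := by
  rw [sum_mul_sum, ← sum_product']
  refine sum_le_sum_of_injOn (fun n => (n.gcd q, n / n.gcd q)) (fun n hn => ?_)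
    (fun a _ b _ h => ?_) (fun n hn => ?_) fun x _ => mul_nonneg (hf _) (hf _)
  · simp only [mem_filter, mem_Ioc] at hn
    obtain ⟨⟨hpos, hle⟩, hsq⟩ := hn
    have hdvd := Nat.gcd_dvd_left n q
    simp only [mem_product, mem_filter, mem_Ioc, Nat.mem_divisors]
    exact ⟨⟨Nat.gcd_dvd_right n q, hq⟩,
      ⟨Nat.div_pos (Nat.le_of_dvd hpos hdvd) (Nat.gcd_pos_of_pos_left q hpos),
        (Nat.div_le_self n _).trans hle⟩, hsq.squarefree_of_dvd (Nat.div_dvd_of_dvd hdvd),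
      Nat.coprime_div_gcd_of_squarefree hsq hq⟩
  · obtain ⟨hgcd, hdiv⟩ := Prod.mk.inj h
    rw [← Nat.mul_div_cancel' (Nat.gcd_dvd_left a q), hdiv, hgcd,
      Nat.mul_div_cancel' (Nat.gcd_dvd_left b q)]
  · have hsq := (mem_filter.1 hn).2
    have hmul := Nat.mul_div_cancel' (Nat.gcd_dvd_left n q)
    dsimp only
    rw [← hmult.map_mul_of_coprime (Nat.coprime_of_squarefree_mul (hmul.symm ▸ hsq)), hmul]

end DivisorSums

section LocalCounts

lemma abs_card_Ioc_filter_modEq_sub_le (M N v : ℕ) {d : ℕ} (hd : 0 < d) :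
    |(#{n ∈ Ioc M (M + N) | n ≡ v [MOD d]} : ℝ) - N / d| ≤ 1 := by
  set A : ℚ := ((M + N : ℕ) - v) / d with hA
  set B : ℚ := (M - v) / d with hB
  have hAB : A - B = N / d := by rw [hA, hB]; push_cast; ring
  have hBA : B ≤ A := sub_nonneg.1 (hAB ▸ by positivity)
  have hcard : (#{n ∈ Ioc M (M + N) | n ≡ v [MOD d]} : ℤ) = ⌊A⌋ - ⌊B⌋ := by
    rw [Nat.Ioc_filter_modEq_card M (M + N) hd v,
      max_eq_left (sub_nonneg.2 (Int.floor_mono hBA))]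
  have hrat : |(#{n ∈ Ioc M (M + N) | n ≡ v [MOD d]} : ℚ) - N / d| ≤ 1 := by
    rw [← Int.cast_natCast, hcard, ← hAB, Int.cast_sub, abs_le]
    constructor <;>
      linarith [Int.floor_le A, Int.lt_floor_add_one A, Int.floor_le B, Int.lt_floor_add_one B]
  simpa using (Rat.cast_le (K := ℝ)).2 hrat

lemma mul_dvd_mul_add_and_gcd_eq_iff {a b k n : ℕ} (ha : 0 < a) (hb : b.Coprime k) :
    a * b ∣ n * (n + k) ∧ n.gcd (a * b) = a ↔ a ∣ n ∧ b ∣ n + k := by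
  constructor
  · rintro ⟨hdvd, hgcd⟩
    obtain ⟨m, rfl⟩ : a ∣ n := hgcd ▸ Nat.gcd_dvd_left n (a * b)
    have hmb : m.Coprime b := by
      rw [Nat.gcd_mul_left] at hgcd
      exact Nat.eq_of_mul_eq_mul_left ha (hgcd.trans (mul_one a).symm)
    rw [mul_assoc] at hdvd
    exact ⟨dvd_mul_right a m, hmb.symm.dvd_of_dvd_mul_left (Nat.dvd_of_mul_dvd_mul_left ha hdvd)⟩
  · rintro ⟨han, hbn⟩
    have hbn_cop : b.Coprime n :=
      Nat.eq_one_of_dvd_coprimes hb (Nat.gcd_dvd_left b n)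
        ((Nat.dvd_add_right (Nat.gcd_dvd_right b n)).1 ((Nat.gcd_dvd_left b n).trans hbn))
    exact ⟨mul_dvd_mul han hbn, by
      rw [hbn_cop.gcd_mul_right_cancel_right, Nat.gcd_eq_right han]⟩

lemma card_filter_dvd_mul_add {d k : ℕ} (hd : d ≠ 0) (hdk : d.Coprime k) (s : Finset ℕ) :
    #{n ∈ s | d ∣ n * (n + k)} =
      ∑ x ∈ d.divisorsAntidiagonal, #{n ∈ s | x.1 ∣ n ∧ x.2 ∣ n + k} := by
  rw [card_eq_sum_card_fiberwise (f := fun n => (n.gcd d, d / n.gcd d))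
    (t := d.divisorsAntidiagonal) fun n _ => by
      simpa [hd] using Nat.mul_div_cancel' (Nat.gcd_dvd_right n d)]
  refine sum_congr rfl fun x hx => ?_
  obtain ⟨a, b⟩ := x
  obtain ⟨rfl, hab⟩ := Nat.mem_divisorsAntidiagonal.1 hx
  have ha : 0 < a := Nat.pos_of_ne_zero (left_ne_zero_of_mul hab)
  have hpair : ∀ n : ℕ, (n.gcd (a * b), a * b / n.gcd (a * b)) = (a, b) ↔ n.gcd (a * b) = a :=
    fun n => ⟨fun h => (Prod.mk.inj h).1, fun h => by rw [h, Nat.mul_div_cancel_left b ha]⟩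
  rw [filter_filter]
  congr 1
  refine filter_congr fun n _ => ?_
  rw [hpair, mul_dvd_mul_add_and_gcd_eq_iff ha (hdk.coprime_dvd_left (dvd_mul_left b a))]

lemma exists_dvd_and_dvd_add_iff_modEq {a b : ℕ} (hab : a.Coprime b) (hb : 0 < b) (k : ℕ) :
    ∃ v, ∀ n, a ∣ n ∧ b ∣ n + k ↔ n ≡ v [MOD a * b] := by
  obtain ⟨v, hva, hvb⟩ := Nat.chineseRemainder hab 0 (k * (b - 1))
  have hvk : v + k ≡ 0 [MOD b] := by
    refine (hvb.add_right k).trans (Nat.modEq_zero_iff_dvd.2 ⟨k, ?_⟩)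
    rw [← Nat.mul_succ, Nat.succ_eq_add_one, Nat.sub_add_cancel hb, mul_comm]
  refine ⟨v, fun n => ?_⟩
  rw [← Nat.modEq_and_modEq_iff_modEq_mul hab, ← Nat.modEq_zero_iff_dvd, ← Nat.modEq_zero_iff_dvd]
  exact and_congr ⟨fun h => h.trans hva.symm, fun h => h.trans hva⟩
    ⟨fun h => Nat.ModEq.add_right_cancel' k (h.trans hvk.symm), fun h => (h.add_right k).trans hvk⟩

lemma abs_card_Ioc_filter_dvd_mul_add_sub_le {d k : ℕ} (hd : Squarefree d) (hdk : d.Coprime k)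
    (M N : ℕ) :
    |(#{n ∈ Ioc M (M + N) | d ∣ n * (n + k)} : ℝ) - divisorDensity d * N| ≤ #d.divisors := by
  have hcount : ∀ x ∈ d.divisorsAntidiagonal,
      |(#{n ∈ Ioc M (M + N) | x.1 ∣ n ∧ x.2 ∣ n + k} : ℝ) - N / d| ≤ 1 := by
    intro x hx
    obtain ⟨a, b⟩ := x
    obtain ⟨rfl, hab⟩ := Nat.mem_divisorsAntidiagonal.1 hx
    obtain ⟨v, hv⟩ := exists_dvd_and_dvd_add_iff_modEq (Nat.coprime_of_squarefree_mul hd)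
      (Nat.pos_of_ne_zero (right_ne_zero_of_mul hab)) k
    simp only [hv]
    exact abs_card_Ioc_filter_modEq_sub_le M N v (Nat.pos_of_ne_zero hab)
  calc |(#{n ∈ Ioc M (M + N) | d ∣ n * (n + k)} : ℝ) - divisorDensity d * N|
      = |∑ x ∈ d.divisorsAntidiagonal,
          ((#{n ∈ Ioc M (M + N) | x.1 ∣ n ∧ x.2 ∣ n + k} : ℝ) - N / d)| := by
        rw [card_filter_dvd_mul_add hd.ne_zero hdk, sum_sub_distrib, sum_const, nsmul_eq_mul,
          card_divisorsAntidiagonal, divisorDensity_apply, Nat.cast_sum]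
        congr 1
        ring
    _ ≤ ∑ _x ∈ d.divisorsAntidiagonal, (1 : ℝ) :=
        (abs_sum_le_sum_abs _ _).trans (sum_le_sum hcount)
    _ = #d.divisors := by rw [sum_const, nsmul_one, card_divisorsAntidiagonal]

end LocalCounts

section PrimePairs

/-- The product of the primes `p ≤ Y` not dividing `q`. -/
def coprimePrimorial (Y q : ℕ) : ℕ := primorial Y / (primorial Y).gcd q

lemma squarefree_coprimePrimorial (Y q : ℕ) : Squarefree (coprimePrimorial Y q) :=
  (squarefree_primorial Y).squarefree_of_dvd (Nat.div_dvd_of_dvd (Nat.gcd_dvd_left _ q))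

lemma dvd_coprimePrimorial_iff {Y q l : ℕ} :
    l ∣ coprimePrimorial Y q ↔ l ∣ primorial Y ∧ l.Coprime q := by
  have hcop : (coprimePrimorial Y q).Coprime q := by
    rcases eq_or_ne q 0 with rfl | hq
    · simp [coprimePrimorial, Nat.div_self (primorial_pos Y)]
    · exact Nat.coprime_div_gcd_of_squarefree (squarefree_primorial Y) hq
  have hmul : (primorial Y).gcd q * coprimePrimorial Y q = primorial Y :=
    Nat.mul_div_cancel' (Nat.gcd_dvd_left _ q)
  constructor
  · exact fun hl => ⟨hl.trans (Dvd.intro_left _ hmul), hcop.coprime_dvd_left hl⟩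
  · rintro ⟨hl, hlq⟩
    exact (hlq.coprime_dvd_right (Nat.gcd_dvd_right _ q)).dvd_of_dvd_mul_left (hmul.symm ▸ hl)

lemma divisors_coprimePrimorial_filter_le (Y q : ℕ) :
    {l ∈ (coprimePrimorial Y q).divisors | l ≤ Y} =
      {l ∈ Ioc 0 Y | Squarefree l ∧ l.Coprime q} := by
  ext l
  simp only [mem_filter, Nat.mem_divisors, mem_Ioc, dvd_coprimePrimorial_iff]
  constructor
  · rintro ⟨⟨⟨hl, hlq⟩, -⟩, hlY⟩
    have hsq := (squarefree_primorial Y).squarefree_of_dvd hl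
    exact ⟨⟨Nat.pos_of_ne_zero hsq.ne_zero, hlY⟩, hsq, hlq⟩
  · rintro ⟨⟨-, hlY⟩, hsq, hlq⟩
    exact ⟨⟨⟨hsq.dvd_primorial.trans (primorial_dvd_primorial hlY), hlq⟩,
      (squarefree_coprimePrimorial Y q).ne_zero⟩, hlY⟩

lemma divisorDensity_of_prime {p : ℕ} (hp : p.Prime) : divisorDensity p = 2 / p := by
  rw [divisorDensity_apply, hp.divisors, card_pair hp.one_lt.ne, Nat.cast_two]

lemma inv_divisorDensity_le {d : ℕ} (hd : d ≠ 0) : (divisorDensity d)⁻¹ ≤ d := by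
  rw [divisorDensity_apply, inv_div]
  refine div_le_self d.cast_nonneg ?_
  exact_mod_cast card_pos.2 (Nat.nonempty_divisors.2 hd)

/-- The sieve problem of removing from the values `n * (n + k)`, `M < n ≤ M + N`, those having a
prime factor `p ≤ Y` with `p ∤ 2 * k`. Primes dividing `k` are left out because `n` and `n + k`
vanish together modulo them, and `2` because its density `2 / 2` would not be less than `1`. -/
noncomputable def shiftedPairSieve (M N Y k : ℕ) : BoundingSieve where
  support := (Ioc M (M + N)).image fun n => n * (n + k)
  prodPrimes := coprimePrimorial Y (2 * k)
  prodPrimes_squarefree := squarefree_coprimePrimorial Y (2 * k)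
  weights _ := 1
  weights_nonneg _ := zero_le_one
  totalMass := N
  nu := divisorDensity
  nu_mult := isMultiplicative_divisorDensity
  nu_pos_of_prime p hp _ := by
    rw [divisorDensity_of_prime hp]
    exact div_pos two_pos (Nat.cast_pos.2 hp.pos)
  nu_lt_one_of_prime p hp hdvd := by
    have hp_odd : p ≠ 2 := by
      rintro rfl
      exact Nat.not_coprime_of_dvd_of_dvd one_lt_two dvd_rfl (dvd_mul_right 2 k)
        (dvd_coprimePrimorial_iff.1 hdvd).2
    rw [divisorDensity_of_prime hp, div_lt_one (Nat.cast_pos.2 hp.pos)]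
    exact_mod_cast hp.two_le.lt_of_ne' hp_odd

lemma injective_mul_add (k : ℕ) : Function.Injective fun n : ℕ => n * (n + k) :=
  StrictMono.injective fun a b hab =>
    Nat.mul_lt_mul_of_lt_of_le hab (Nat.add_le_add_right hab.le k) (by omega)

lemma abs_rem_shiftedPairSieve_le {Y k d : ℕ} (hd : d ∣ coprimePrimorial Y (2 * k)) (M N : ℕ) :
    |(shiftedPairSieve M N Y k).rem d| ≤ #d.divisors := by
  have hdk : d.Coprime k := (dvd_coprimePrimorial_iff.1 hd).2.coprime_dvd_right (dvd_mul_left k 2)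
  have hrem : (shiftedPairSieve M N Y k).rem d =
      #{n ∈ Ioc M (M + N) | d ∣ n * (n + k)} - divisorDensity d * N := by
    simp only [BoundingSieve.rem, BoundingSieve.multSum, shiftedPairSieve]
    rw [sum_image (injective_mul_add k).injOn, sum_boole]
  rw [hrem]
  exact abs_card_Ioc_filter_dvd_mul_add_sub_le
    ((squarefree_coprimePrimorial Y (2 * k)).squarefree_of_dvd hd) hdk M N

lemma sum_sum_rem_shiftedPairSieve_le (M N Y k : ℕ) :
    ∑ d₁ ∈ (coprimePrimorial Y (2 * k)).divisors with d₁ ≤ Y,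
      ∑ d₂ ∈ (coprimePrimorial Y (2 * k)).divisors with d₂ ≤ Y,
        (divisorDensity d₁)⁻¹ * (divisorDensity d₂)⁻¹ *
          |(shiftedPairSieve M N Y k).rem (d₁.lcm d₂)| ≤ (Y : ℝ) ^ 6 := by
  set P := coprimePrimorial Y (2 * k)
  set T := {d ∈ P.divisors | d ≤ Y} with hT
  have hcard : #T ≤ Y := by
    rw [hT, divisors_coprimePrimorial_filter_le]
    exact (card_filter_le _ _).trans (by simp)
  have hpos : ∀ d ∈ T, 0 < d := fun d hd => Nat.pos_of_mem_divisors (mem_filter.1 hd).1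
  have hdvd : ∀ d ∈ T, d ∣ P := fun d hd => Nat.dvd_of_mem_divisors (mem_filter.1 hd).1
  have hrem : ∀ d₁ ∈ T, ∀ d₂ ∈ T,
      |(shiftedPairSieve M N Y k).rem (d₁.lcm d₂)| ≤ (d₁ * d₂ : ℝ) := fun d₁ h₁ d₂ h₂ =>
    calc |(shiftedPairSieve M N Y k).rem (d₁.lcm d₂)|
        ≤ #(d₁.lcm d₂).divisors :=
          abs_rem_shiftedPairSieve_le (Nat.lcm_dvd (hdvd d₁ h₁) (hdvd d₂ h₂)) M N
      _ ≤ (d₁ * d₂ : ℝ) := by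
          exact_mod_cast (Nat.card_divisors_le_self _).trans
            (Nat.le_of_dvd (Nat.mul_pos (hpos d₁ h₁) (hpos d₂ h₂)) (Nat.lcm_dvd_mul d₁ d₂))
  calc ∑ d₁ ∈ T, ∑ d₂ ∈ T, (divisorDensity d₁)⁻¹ * (divisorDensity d₂)⁻¹ *
          |(shiftedPairSieve M N Y k).rem (d₁.lcm d₂)|
      ≤ ∑ d₁ ∈ T, ∑ d₂ ∈ T, (d₁ * d₂ * (d₁ * d₂) : ℝ) := by
        gcongr with d₁ h₁ d₂ h₂
        · exact inv_nonneg.2 (divisorDensity_nonneg d₂)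
        · exact inv_divisorDensity_le (hpos d₁ h₁).ne'
        · exact inv_divisorDensity_le (hpos d₂ h₂).ne'
        · exact hrem d₁ h₁ d₂ h₂
    _ = (∑ d ∈ T, (d : ℝ) ^ 2) ^ 2 := by
        rw [sq (∑ d ∈ T, (d : ℝ) ^ 2), sum_mul_sum]
        exact sum_congr rfl fun _ _ => sum_congr rfl fun _ _ => by ring
    _ ≤ (∑ _d ∈ T, (Y : ℝ) ^ 2) ^ 2 := by
        gcongr with d hd
        exact (mem_filter.1 hd).2
    _ ≤ (Y * (Y : ℝ) ^ 2) ^ 2 := by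
        rw [sum_const, nsmul_eq_mul]
        gcongr
    _ = (Y : ℝ) ^ 6 := by ring

lemma card_prime_pairs_le_siftedSum_add (M N Y k : ℕ) :
    (#{n ∈ Ioc M (M + N) | n.Prime ∧ (n + k).Prime} : ℝ) ≤
      (shiftedPairSieve M N Y k).siftedSum + Y := by
  set P := coprimePrimorial Y (2 * k)
  have hlarge : ∀ q : ℕ, q.Prime → Y < q → P.Coprime q := fun q hq hqY =>
    Nat.Coprime.symm <| hq.coprime_iff_not_dvd.2 fun hdvd =>
      hqY.not_ge (hq.dvd_primorial_iff.1 (dvd_coprimePrimorial_iff.1 hdvd).1)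
  have hsift : (shiftedPairSieve M N Y k).siftedSum =
      #{n ∈ Ioc M (M + N) | P.Coprime (n * (n + k))} :=
    (sum_image (injective_mul_add k).injOn).trans (sum_boole _ _)
  have hsubset : {n ∈ Ioc M (M + N) | n.Prime ∧ (n + k).Prime} ⊆
      {n ∈ Ioc M (M + N) | P.Coprime (n * (n + k))} ∪ Ioc 0 Y := by
    intro n hn
    simp only [mem_filter, mem_union, mem_Ioc] at hn ⊢
    obtain ⟨hwindow, hn_prime, hnk_prime⟩ := hn
    rcases le_or_gt n Y with hnY | hYn
    · exact Or.inr ⟨hn_prime.pos, hnY⟩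
    · exact Or.inl ⟨hwindow,
        (hlarge n hn_prime hYn).mul_right (hlarge (n + k) hnk_prime (by omega))⟩
  rw [hsift]
  exact_mod_cast (card_le_card hsubset).trans ((card_union_le _ _).trans (by simp))

theorem card_prime_pairs_le_selberg (M N k : ℕ) {Y : ℕ} (hY : 0 < Y) :
    (#{n ∈ Ioc M (M + N) | n.Prime ∧ (n + k).Prime} : ℝ) ≤
      N / (∑ l ∈ Ioc 0 Y with Squarefree l ∧ l.Coprime (2 * k), divisorDensity l) + Y ^ 6 + Y := by
  set s := shiftedPairSieve M N Y k
  set T := {l ∈ s.prodPrimes.divisors | l ≤ Y}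
  have hT : T = {l ∈ Ioc 0 Y | Squarefree l ∧ l.Coprime (2 * k)} :=
    divisors_coprimePrimorial_filter_le Y (2 * k)
  have hT_subset : T ⊆ s.prodPrimes.divisors := filter_subset _ _
  have hone : 1 ∈ T := mem_filter.2 ⟨Nat.one_mem_divisors.2 BoundingSieve.prodPrimes_ne_zero, hY⟩
  have hclosed : ∀ m ∈ T, ∀ d, d ∣ m → d ∈ T := by
    intro m hm d hdm
    obtain ⟨hmP, hmY⟩ := mem_filter.1 hm
    exact mem_filter.2 ⟨Nat.divisors_subset_of_dvd BoundingSieve.prodPrimes_ne_zero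
      (Nat.dvd_of_mem_divisors hmP) (Nat.mem_divisors.2 ⟨hdm, (Nat.pos_of_mem_divisors hmP).ne'⟩),
      (Nat.le_of_dvd (Nat.pos_of_mem_divisors hmP) hdm).trans hmY⟩
  have hdensity_pos : 0 < ∑ l ∈ T, divisorDensity l :=
    sum_pos (fun l hl => BoundingSieve.nu_pos_of_dvd_prodPrimes (s := s)
      (Nat.dvd_of_mem_divisors (hT_subset hl))) ⟨1, hone⟩
  calc (#{n ∈ Ioc M (M + N) | n.Prime ∧ (n + k).Prime} : ℝ)
      ≤ s.siftedSum + Y := card_prime_pairs_le_siftedSum_add M N Y k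
    _ ≤ N / (∑ l ∈ T, s.selbergTerms l) + Y ^ 6 + Y := by
        gcongr
        exact (siftedSum_le_selberg s hT_subset ⟨1, hone⟩ hclosed).trans
          (add_le_add le_rfl (sum_sum_rem_shiftedPairSieve_le M N Y k))
    _ ≤ N / (∑ l ∈ T, divisorDensity l) + Y ^ 6 + Y := by
        gcongr with l hl
        exact nu_le_selbergTerms s (Nat.dvd_of_mem_divisors (hT_subset hl))
    _ = _ := by rw [hT]

lemma card_prime_pairs_le_div_sq_log_add_one {t k : ℕ} (ht : 0 < t) (hk : k ≠ 0) (M N : ℕ) :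
    (#{n ∈ Ioc M (M + N) | n.Prime ∧ (n + k).Prime} : ℝ) ≤
      8 * (∑ m ∈ (2 * k).divisors, divisorDensity m) * N / Real.log (t + 1) ^ 2 + 2 * t ^ 12 := by
  set F := ∑ m ∈ (2 * k).divisors, divisorDensity m
  set V := ∑ l ∈ Ioc 0 (t ^ 2) with Squarefree l ∧ l.Coprime (2 * k), divisorDensity l
  have ht_one : (1 : ℝ) ≤ t := by exact_mod_cast ht
  have hlog : 0 < Real.log (t + 1) ^ 2 := pow_pos (Real.log_pos (by linarith)) 2
  have hlog_le : Real.log (t + 1) ^ 2 ≤ 8 * (F * V) := by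
    grw [sq_log_add_one_le_sum_divisorDensity, sum_squarefree_le_sum_divisors_mul_sum_coprime
      isMultiplicative_divisorDensity divisorDensity_nonneg (mul_ne_zero two_ne_zero hk)]
  have hV_nonneg : 0 ≤ V := sum_nonneg fun l _ => divisorDensity_nonneg l
  have hV : 0 < V := hV_nonneg.lt_of_ne' fun h => by
    rw [h, mul_zero, mul_zero] at hlog_le
    exact hlog.not_ge hlog_le
  have hmain : N / V ≤ 8 * F * N / Real.log (t + 1) ^ 2 := by
    rw [div_le_div_iff₀ hV hlog]
    linarith [mul_le_mul_of_nonneg_left hlog_le N.cast_nonneg]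
  have hpow : (t : ℝ) ^ 2 ≤ t ^ 12 := pow_le_pow_right₀ ht_one (by norm_num)
  have hsieve := card_prime_pairs_le_selberg M N k (pow_pos ht 2)
  push_cast at hsieve
  linarith [show ((t : ℝ) ^ 2) ^ 6 = t ^ 12 by ring]

lemma one_le_sum_divisors_divisorDensity {n : ℕ} (hn : n ≠ 0) :
    1 ≤ ∑ m ∈ n.divisors, divisorDensity m := by
  rw [← isMultiplicative_divisorDensity.map_one]
  exact single_le_sum (fun m _ => divisorDensity_nonneg m) (Nat.one_mem_divisors.2 hn)

theorem card_prime_pairs_le_div_sq_log (M : ℕ) {N k : ℕ} (hN : 2 ≤ N) (hk : k ≠ 0) :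
    (#{n ∈ Ioc M (M + N) | n.Prime ∧ (n + k).Prime} : ℝ) ≤
      1960 * (∑ m ∈ (2 * k).divisors, divisorDensity m) * N / Real.log N ^ 2 := by
  set F := ∑ m ∈ (2 * k).divisors, divisorDensity m
  -- The exponent leaves room for both `t ^ 12` from the sieve error and `log (t + 1) ^ 2 ≤ t ^ 2`.
  set t := Nat.nthRoot 14 N
  have hF : 1 ≤ F := one_le_sum_divisors_divisorDensity (mul_ne_zero two_ne_zero hk)
  have ht : 0 < t := (Nat.le_nthRoot_iff (by norm_num)).2 (by norm_num; omega)
  have ht_pow : (t : ℝ) ^ 14 ≤ N := by exact_mod_cast Nat.pow_nthRoot_le (.inl (by norm_num))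
  have hN_lt : (N : ℝ) < (t + 1) ^ 14 := by
    exact_mod_cast Nat.lt_pow_nthRoot_add_one (by norm_num) N
  have hN_two : (2 : ℝ) ≤ N := by exact_mod_cast hN
  have ht_pos : (0 : ℝ) < t := by exact_mod_cast ht
  set L := Real.log (t + 1)
  have hL : 0 < L := Real.log_pos (by linarith)
  have hL_le : L ≤ t := by linarith [Real.log_le_sub_one_of_pos (show (0 : ℝ) < t + 1 by linarith)]
  have hlogN : 0 < Real.log N := Real.log_pos (by linarith)
  have hlogN_le : Real.log N ≤ 14 * L := by
    simpa [L] using Real.log_le_log (by linarith) hN_lt.le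
  have herror : 2 * (t : ℝ) ^ 12 ≤ 2 * F * N / L ^ 2 := by
    rw [le_div_iff₀ (by positivity)]
    calc 2 * (t : ℝ) ^ 12 * L ^ 2 ≤ 2 * (t : ℝ) ^ 12 * t ^ 2 := by gcongr
      _ = 2 * 1 * (t : ℝ) ^ 14 := by ring
      _ ≤ 2 * F * N := by gcongr
  calc (#{n ∈ Ioc M (M + N) | n.Prime ∧ (n + k).Prime} : ℝ)
      ≤ 8 * F * N / L ^ 2 + 2 * F * N / L ^ 2 :=
        (card_prime_pairs_le_div_sq_log_add_one ht hk M N).trans (by gcongr)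
    _ = 1960 * F * N / (14 * L) ^ 2 := by field_simp; ring
    _ ≤ 1960 * F * N / Real.log N ^ 2 := by gcongr

end PrimePairs

section ClosePrimePairs

/-- The pairs of primes `p < p'` in `(M, M + N]` with `p' - p ≤ h`. -/
noncomputable def closePrimePairs (M N : ℕ) (h : ℝ) : Finset (ℕ × ℕ) :=
  {x ∈ Ioc M (M + N) ×ˢ Ioc M (M + N) |
    x.1.Prime ∧ x.2.Prime ∧ x.1 < x.2 ∧ (x.2 : ℝ) - x.1 ≤ h}

lemma card_closePrimePairs_le_sum (M N : ℕ) (h : ℝ) :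
    #(closePrimePairs M N h) ≤
      ∑ k ∈ Ioc 0 ⌊h⌋₊, #{n ∈ Ioc M (M + N) | n.Prime ∧ (n + k).Prime} := by
  rw [← card_sigma]
  refine card_le_card_of_injOn (fun x => ⟨x.2 - x.1, x.1⟩) ?_ ?_
  · rintro ⟨p, q⟩ hx
    simp only [closePrimePairs, coe_filter, mem_product, mem_Ioc, Set.mem_ofPred_eq] at hx
    obtain ⟨⟨hp, -⟩, hp_prime, hq_prime, hlt, hle⟩ := hx
    simp only [coe_sigma, Set.mem_sigma_iff, mem_coe, mem_Ioc, mem_filter]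
    refine ⟨⟨by omega, Nat.le_floor ?_⟩, hp, hp_prime, ?_⟩
    · rwa [Nat.cast_sub hlt.le]
    · rwa [Nat.add_sub_cancel' hlt.le]
  · rintro ⟨p, q⟩ hx ⟨p', q'⟩ hx' heq
    simp only [closePrimePairs, coe_filter, mem_product, mem_Ioc, Set.mem_ofPred_eq] at hx hx'
    simp only [Sigma.mk.injEq, heq_eq_eq] at heq
    rw [Prod.mk.injEq]
    omega

theorem card_closePrimePairs_le (M : ℕ) {N : ℕ} (hN : 2 ≤ N) {h : ℝ} (hh : 0 ≤ h) :
    (#(closePrimePairs M N h) : ℝ) ≤ 15680 * h * N / Real.log N ^ 2 := by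
  calc (#(closePrimePairs M N h) : ℝ)
      ≤ ∑ k ∈ Ioc 0 ⌊h⌋₊, (#{n ∈ Ioc M (M + N) | n.Prime ∧ (n + k).Prime} : ℝ) := by
        exact_mod_cast card_closePrimePairs_le_sum M N h
    _ ≤ ∑ k ∈ Ioc 0 ⌊h⌋₊,
          1960 * (∑ m ∈ (2 * k).divisors, divisorDensity m) * N / Real.log N ^ 2 :=
        sum_le_sum fun k hk => card_prime_pairs_le_div_sq_log M hN (mem_Ioc.1 hk).1.ne'
    _ = 1960 * (∑ k ∈ Ioc 0 ⌊h⌋₊, ∑ m ∈ (2 * k).divisors, divisorDensity m) * N /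
          Real.log N ^ 2 := by
        rw [mul_sum, sum_mul, sum_div]
    _ ≤ 1960 * (8 * h) * N / Real.log N ^ 2 := by
        grw [sum_sum_divisors_two_mul_divisorDensity_le, Nat.floor_le hh]
    _ = 15680 * h * N / Real.log N ^ 2 := by ring

lemma div_log_le_two_mul_primeCounting {N : ℕ} (hN : 16 ≤ N) :
    N / Real.log N ≤ 2 * Nat.primeCounting N := by
  have hN_real : (16 : ℝ) ≤ N := by exact_mod_cast hN
  have hlogN : 0 < Real.log N := Real.log_pos (by linarith)
  have hlog_two := Real.log_two_gt_d9
  have hlog_add_one : Real.log (N + 1) ≤ N / 16 + 2 := by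
    have hscale : Real.log (N + 1) = Real.log ((N + 1) / 16) + 4 * Real.log 2 := by
      rw [Real.log_div (by positivity) (by norm_num), show (16 : ℝ) = 2 ^ 4 by norm_num,
        Real.log_pow]
      push_cast
      ring
    linarith [Real.log_le_sub_one_of_pos (show (0 : ℝ) < (N + 1) / 16 by positivity),
      Real.log_two_lt_d9]
  have hnumerator : (N : ℝ) / 2 ≤ N * Real.log 2 - Real.log (N + 1) := by nlinarith
  calc (N : ℝ) / Real.log N = 2 * (N / 2 / Real.log N) := by ring
    _ ≤ 2 * ((N * Real.log 2 - Real.log (N + 1)) / Real.log N) := by gcongr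
    _ ≤ 2 * Nat.primeCounting N := by
        gcongr
        exact Chebyshev.pi_ge N

theorem close_prime_pairs_bound_general :
    ∃ C : ℝ, 0 < C ∧ ∃ N₀ : ℕ, ∀ M N : ℕ, N₀ ≤ N → ∀ h : ℝ, 0 ≤ h →
      (#(closePrimePairs M N h) : ℝ) ≤ C * h * N / Real.log N ^ 2 ∧
      (#(closePrimePairs M N h) : ℝ) ≤ C * (h / Real.log N) * Nat.primeCounting N := by
  refine ⟨31360, by norm_num, 16, fun M N hN h hh => ?_⟩
  have hcard := card_closePrimePairs_le M (by omega : 2 ≤ N) hh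
  constructor
  · calc (#(closePrimePairs M N h) : ℝ) ≤ 15680 * h * N / Real.log N ^ 2 := hcard
      _ ≤ 31360 * h * N / Real.log N ^ 2 := by gcongr; norm_num
  · calc (#(closePrimePairs M N h) : ℝ) ≤ 15680 * h * N / Real.log N ^ 2 := hcard
      _ = 15680 * (h / Real.log N) * (N / Real.log N) := by ring
      _ ≤ 15680 * (h / Real.log N) * (2 * Nat.primeCounting N) := by
          gcongr
          exact div_log_le_two_mul_primeCounting hN
      _ = 31360 * (h / Real.log N) * Nat.primeCounting N := by ring

end ClosePrimePairs

/-- **(4.5) of GPY IV.** There is an absolute constant `C` such that for all sufficiently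
large `N` and all `2 < h ≤ N`, the number of pairs of primes `(p, p')` with
`N < p, p' ≤ 2N` and `0 < p' - p ≤ h` is at most `C h N/(log N)²`, and hence is
`≪ (h/log N) π(N)`. -/
theorem close_prime_pairs_bound :
    ∃ C : ℝ, 0 < C ∧ ∃ N₀ : ℕ, ∀ N : ℕ, N₀ ≤ N → ∀ h : ℝ, 2 < h → h ≤ N →
      ((((Finset.Ioc N (2*N)) ×ˢ (Finset.Ioc N (2*N))).filter (fun x =>
          x.1.Prime ∧ x.2.Prime ∧ x.1 < x.2 ∧ ((x.2 : ℝ) - (x.1 : ℝ)) ≤ h)).card : ℝ)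
        ≤ C * h * N / (Real.log N)^2
      ∧
      ((((Finset.Ioc N (2*N)) ×ˢ (Finset.Ioc N (2*N))).filter (fun x =>
          x.1.Prime ∧ x.2.Prime ∧ x.1 < x.2 ∧ ((x.2 : ℝ) - (x.1 : ℝ)) ≤ h)).card : ℝ)
        ≤ C * (h / Real.log N) * (Nat.primeCounting N : ℝ) := by
  obtain ⟨C, hC, N₀, hbound⟩ := close_prime_pairs_bound_general
  exact ⟨C, hC, N₀, fun N hN h hh _ => by
    simpa [closePrimePairs, two_mul] using hbound N N hN h (by linarith)⟩
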